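/- arXiv:2603.12767 — 2 statements merged into one kernel-verified Lean document; each statement's English description precedes it below -/
import Mathlib

section
/- Let X be a random vector in ℝ^d with E[‖X‖²] < ∞, mean μ, and an elliptical density x ↦ C·g((x − μ)ᵀΣ⁻¹(x − μ)) with respect to Lebesgue measure, Σ positive definite, such that every projection ⟨X − μ, u⟩ (u a unit vector) has a weakly symmetric log-concave density. With F(u, t) as defined by the halfspaces A_{u,t} = {x : ⟨x − μ, u⟩ ≤ t}, there holds F(u, 0) = ‖μ‖² + 4c₀²·(uᵀΣ²u)/(uᵀΣu) for all unit u, where c₀ = E[max(⟨X − μ, w⟩, 0)]/√(wᵀΣw) is independent of the unit vector w; consequently, the maximum of u ↦ F(u, 0) over unit vectors u is ‖μ‖² + 4c₀²·λ_max(Σ), attained exactly at the unit eigenvectors of Σ corresponding to the largest eigenvalue λ_max(Σ). -/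
open MeasureTheory Real Set
open scoped RealInnerProductSpace

/-- The halfspace objective
`F(u,t) = ‖E[X·1_{A_{u,t}}]‖²/P(X ∈ A_{u,t}) + ‖E[X·1_{A_{u,t}^c}]‖²/P(X ∈ A_{u,t}^c)` where
`A_{u,t} = {x : ⟨x − μ, u⟩ ≤ t}`. -/
noncomputable def halfspaceObjective {Ω : Type*} [MeasurableSpace Ω] {d : ℕ}
    (P : Measure Ω) (X : Ω → EuclideanSpace ℝ (Fin d))
    (μ u : EuclideanSpace ℝ (Fin d)) (t : ℝ) : ℝ :=
  ‖∫ ω in {ω | ⟪X ω - μ, u⟫ ≤ t}, X ω ∂P‖ ^ 2 / (P {ω | ⟪X ω - μ, u⟫ ≤ t}).toReal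
    + ‖∫ ω in {ω | t < ⟪X ω - μ, u⟫}, X ω ∂P‖ ^ 2 / (P {ω | t < ⟪X ω - μ, u⟫}).toReal

/-!
Write `X - μ = A Y` with `Y` spherically symmetric and `A A† = Σ`. The reflection in the line
`ℝ ∙ v` preserves `{y | 0 < ⟪y, v⟫}`, so the moment of `Y` over this halfspace is a multiple of `v`.
Taking `v = A† u`, the moment `m` of `X - μ` over `{x | 0 < ⟪x - μ, u⟫}` is a multiple of `Σ u`, and
pairing with `u` gives `m = (E[max(⟪X - μ, u⟫, 0)] / ⟪u, Σ u⟫) Σ u = (c₀ / √⟪u, Σ u⟫) Σ u`.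
Since the law of `X - μ` is symmetric and hyperplanes are null, both halves have probability
`1 / 2`, so
`F(u, 0) = 2 ‖μ / 2 + m‖² + 2 ‖μ / 2 - m‖² = ‖μ‖² + 4 ‖m‖²`. Finally, for an orthonormal eigenbasis
`bᵢ` of `Σ` with eigenvalues `λᵢ`, each term of
`λ_max ⟪u, Σ u⟫ - ‖Σ u‖² = ∑ᵢ λᵢ (λ_max - λᵢ) ⟪bᵢ, u⟫²` is nonnegative, and all of them vanish
exactly when `Σ u = λ_max u`.
-/

section WithDensity

variable {α β : Type*} {mα : MeasurableSpace α} {mβ : MeasurableSpace β}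

theorem measurePreserving_withDensity_comp {κ : Measure α} {ν : Measure β} {φ : α → β}
    (hφ : MeasurePreserving φ κ ν) (hemb : MeasurableEmbedding φ) (f : β → ENNReal) :
    MeasurePreserving φ (κ.withDensity fun x => f (φ x)) (ν.withDensity f) := by
  refine ⟨hφ.measurable, ?_⟩
  ext s hs
  rw [Measure.map_apply hφ.measurable hs, withDensity_apply _ hs,
    withDensity_apply _ (hφ.measurable hs), hφ.setLIntegral_comp_preimage_emb hemb]

theorem map_sub_const_eq_withDensity {G : Type*} [AddGroup G] [MeasurableSpace G] [MeasurableAdd G]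
    {P : Measure α} {κ : Measure G} [κ.IsAddRightInvariant] {X : α → G} (hX : AEMeasurable X P)
    {c : G} {h : G → ENNReal}
    (hdens : P.map X = κ.withDensity fun x => h (x - c)) :
    P.map (fun ω => X ω - c) = κ.withDensity h := by
  have hsub := measurePreserving_sub_right κ c
  rw [← (measurePreserving_withDensity_comp hsub
    (MeasurableEquiv.subRight c).measurableEmbedding h).map_eq, ← hdens,
    AEMeasurable.map_map_of_aemeasurable hsub.measurable.aemeasurable hX]
  rfl

end WithDensity

section Halfspace

variable {E : Type*} [NormedAddCommGroup E] [InnerProductSpace ℝ E] [MeasurableSpace E]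
  {ν : Measure E}

theorem integral_max_inner_pos (hint : Integrable id ν) {v : E} (hv : ν {y | 0 < ⟪y, v⟫} ≠ 0) :
    0 < ∫ y, max ⟪y, v⟫ 0 ∂ν := by
  have hsupp : Function.support (fun y : E => max ⟪y, v⟫ 0) = {y | 0 < ⟪y, v⟫} := by
    ext y
    simp
  refine (integral_pos_iff_support_of_nonneg (fun y => le_max_right _ _)
    (hint.inner_const v).pos_part).2 ?_
  exact pos_iff_ne_zero.2 (by exact hsupp ▸ hv)

variable [BorelSpace E]

theorem measurableSet_setOf_inner_pos (v : E) : MeasurableSet {y : E | 0 < ⟪y, v⟫} :=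
  (isOpen_lt continuous_const (by fun_prop)).measurableSet

theorem inner_setIntegral_halfspace [CompleteSpace E] (hint : Integrable id ν) (v : E) :
    ⟪∫ y in {y | 0 < ⟪y, v⟫}, y ∂ν, v⟫ = ∫ y, max ⟪y, v⟫ 0 ∂ν := by
  have hcomm := integral_inner (𝕜 := ℝ) (hint.integrableOn (s := {y | 0 < ⟪y, v⟫})) v
  simp only [id_eq, real_inner_comm _ v] at hcomm
  rw [← hcomm, ← integral_indicator (measurableSet_setOf_inner_pos v)]
  congr 1 with y
  rcases lt_or_ge 0 ⟪y, v⟫ with h | h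
  · rw [indicator_of_mem (by exact h), max_eq_left h.le]
  · rw [indicator_of_notMem (by exact h.not_gt), max_eq_right h]

theorem measureReal_inner_pos_eq_half [FiniteDimensional ℝ E] [IsProbabilityMeasure ν]
    [ν.IsNegInvariant] (hac : ν ≪ volume) {v : E} (hv : v ≠ 0) :
    ν.real {y | 0 < ⟪y, v⟫} = 1 / 2 := by
  have hneg : ν.real {y | ⟪y, v⟫ < 0} = ν.real {y | 0 < ⟪y, v⟫} := by
    have h := (Measure.measurePreserving_neg ν).measureReal_preimage
      (measurableSet_setOf_inner_pos v).nullMeasurableSet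
    simpa only [preimage_ofPred_eq, inner_neg_left, neg_pos] using h
  have hnull : ν {y | ⟪y, v⟫ = 0} = 0 := by
    refine hac ?_
    convert Measure.addHaar_submodule volume (ℝ ∙ v)ᗮ ?_ using 2
    · ext y
      exact Submodule.mem_orthogonal_singleton_iff_inner_left.symm
    · simpa using hv
  have hle : ν.real {y | ⟪y, v⟫ ≤ 0} = ν.real {y | ⟪y, v⟫ < 0} := by
    refine measureReal_congr ?_
    filter_upwards [measure_eq_zero_iff_ae_notMem.1 hnull] with y hy
    exact propext (Ne.le_iff_lt hy)
  have hcompl : ν.real {y | ⟪y, v⟫ ≤ 0} = 1 - ν.real {y | 0 < ⟪y, v⟫} := by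
    rw [← probReal_compl_eq_one_sub (measurableSet_setOf_inner_pos v)]
    simp only [compl_ofPred, not_lt]
  linarith

end Halfspace

/-- A measure on a real inner product space is *spherically symmetric* if it is invariant under
every linear isometry, reflections included. -/
def IsSphericallySymmetric {E : Type*} [NormedAddCommGroup E] [InnerProductSpace ℝ E]
    [MeasurableSpace E] (σ : Measure E) : Prop :=
  ∀ L : E ≃ₗᵢ[ℝ] E, MeasurePreserving L σ σ

namespace IsSphericallySymmetric

variable {E : Type*} [NormedAddCommGroup E] [InnerProductSpace ℝ E] [MeasurableSpace E]
  {σ : Measure E}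

theorem isNegInvariant (hσ : IsSphericallySymmetric σ) : σ.IsNegInvariant :=
  ⟨(hσ (LinearIsometryEquiv.neg ℝ)).map_eq⟩

variable [BorelSpace E]

theorem of_isAddHaarMeasure [FiniteDimensional ℝ E] (σ : Measure E) [σ.IsAddHaarMeasure] :
    IsSphericallySymmetric σ := fun L => by
  rw [Measure.isAddLeftInvariant_eq_smul σ volume]
  exact L.measurePreserving.smul_measure _

theorem withDensity_norm (hσ : IsSphericallySymmetric σ) (f : ℝ → ENNReal) :
    IsSphericallySymmetric (σ.withDensity fun y => f ‖y‖) := fun L => by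
  simpa only [L.norm_map] using measurePreserving_withDensity_comp (hσ L)
    L.toHomeomorph.measurableEmbedding fun y => f ‖y‖

theorem integral_max_inner_eq_of_norm_eq (hσ : IsSphericallySymmetric σ) {v w : E}
    (h : ‖v‖ = ‖w‖) : ∫ y, max ⟪y, v⟫ 0 ∂σ = ∫ y, max ⟪y, w⟫ 0 ∂σ := by
  set L := (ℝ ∙ (v - w))ᗮ.reflection
  have hLv : L v = w := Submodule.reflection_sub h
  rw [← (hσ L).integral_comp L.toHomeomorph.measurableEmbedding fun y => max ⟪y, w⟫ 0]
  refine integral_congr_ae (.of_forall fun y => ?_)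
  simp only [← hLv, L.inner_map_map]

theorem exists_integral_max_inner_eq_mul_norm (hσ : IsSphericallySymmetric σ) :
    ∃ c : ℝ, ∀ v : E, ∫ y, max ⟪y, v⟫ 0 ∂σ = c * ‖v‖ := by
  rcases subsingleton_or_nontrivial E with _ | _
  · exact ⟨0, fun v => by simp [Subsingleton.elim v 0]⟩
  obtain ⟨e, he⟩ := exists_norm_eq E zero_le_one
  refine ⟨∫ y, max ⟪y, e⟫ 0 ∂σ, fun v => ?_⟩
  have hnorm : ‖v‖ = ‖‖v‖ • e‖ := by rw [norm_smul, norm_norm, he, mul_one]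
  have hscale (y : E) : max ⟪y, ‖v‖ • e⟫ 0 = max ⟪y, e⟫ 0 * ‖v‖ := by
    rw [inner_smul_right, max_mul_of_nonneg _ _ (norm_nonneg v), zero_mul, mul_comm]
  simp only [hσ.integral_max_inner_eq_of_norm_eq hnorm, hscale, integral_mul_const]

theorem setIntegral_halfspace_mem_span (hσ : IsSphericallySymmetric σ) (v : E) :
    ∫ y in {y | 0 < ⟪y, v⟫}, y ∂σ ∈ ℝ ∙ v := by
  set L := (ℝ ∙ v).reflection
  have hLv : L v = v :=
    Submodule.reflection_mem_subspace_eq_self (Submodule.mem_span_singleton_self v)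
  have hpre : L ⁻¹' {y | 0 < ⟪y, v⟫} = {y | 0 < ⟪y, v⟫} := by
    ext y
    simp only [mem_preimage, mem_ofPred_eq, ← L.inner_map_map y v, hLv]
  rw [← Submodule.reflection_eq_self_iff, ← LinearIsometryEquiv.coe_toContinuousLinearEquiv,
    ← ContinuousLinearEquiv.integral_comp_comm]
  conv_lhs => rw [← hpre]
  exact (hσ L).setIntegral_preimage_emb L.toHomeomorph.measurableEmbedding id _

theorem setIntegral_halfspace [CompleteSpace E] (hσ : IsSphericallySymmetric σ)
    (hint : Integrable id σ) (v : E) :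
    ∫ y in {y | 0 < ⟪y, v⟫}, y ∂σ = ((∫ y, max ⟪y, v⟫ 0 ∂σ) / ‖v‖ ^ 2) • v := by
  rcases eq_or_ne v 0 with rfl | hv
  · simp
  obtain ⟨r, hr⟩ := Submodule.mem_span_singleton.1 (hσ.setIntegral_halfspace_mem_span v)
  have hmax : ∫ y, max ⟪y, v⟫ 0 ∂σ = r * ‖v‖ ^ 2 := by
    rw [← inner_setIntegral_halfspace hint, ← hr, real_inner_smul_left, real_inner_self_eq_norm_sq]
  rw [hmax, mul_div_cancel_right₀ _ (by positivity), hr]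

end IsSphericallySymmetric

/-- `IsElliptical T ν` says that `ν` is a nondegenerate elliptical law centred at the origin with
scatter operator `T`. It is encoded by the stochastic representation: `ν` is the image of a
spherically symmetric measure under an invertible linear map `A` with `A A† = T`. -/
def IsElliptical {E : Type*} [NormedAddCommGroup E] [InnerProductSpace ℝ E] [CompleteSpace E]
    [MeasurableSpace E] (T : E →ₗ[ℝ] E) (ν : Measure E) : Prop :=
  ∃ (A : E ≃L[ℝ] E) (σ : Measure E), IsSphericallySymmetric σ ∧
    (∀ x, A ((A : E →L[ℝ] E).adjoint x) = T x) ∧ ν = σ.map A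

namespace IsElliptical

variable {E : Type*} [NormedAddCommGroup E] [InnerProductSpace ℝ E] [CompleteSpace E]
  {T : E →ₗ[ℝ] E}

theorem inner_eq_norm_adjoint_sq {A : E ≃L[ℝ] E}
    (hA : ∀ x, A ((A : E →L[ℝ] E).adjoint x) = T x) (u : E) :
    ⟪u, T u⟫ = ‖(A : E →L[ℝ] E).adjoint u‖ ^ 2 := by
  rw [← hA, ← ContinuousLinearEquiv.coe_coe, ← ContinuousLinearMap.adjoint_inner_left,
    real_inner_self_eq_norm_sq]

variable [MeasurableSpace E] {ν : Measure E}

theorem inner_nonneg (hν : IsElliptical T ν) (u : E) : 0 ≤ ⟪u, T u⟫ := by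
  obtain ⟨A, -, -, hA, -⟩ := hν
  exact inner_eq_norm_adjoint_sq hA u ▸ sq_nonneg _

variable [BorelSpace E]

theorem integral_max_inner_map (A : E ≃L[ℝ] E) (σ : Measure E) (u : E) :
    ∫ z, max ⟪z, u⟫ 0 ∂(σ.map A) = ∫ y, max ⟪y, (A : E →L[ℝ] E).adjoint u⟫ 0 ∂σ := by
  have hemb : MeasurableEmbedding A := A.toHomeomorph.measurableEmbedding
  simp only [hemb.integral_map, ContinuousLinearMap.adjoint_inner_right,
    ContinuousLinearEquiv.coe_coe]

theorem withDensity_inner [FiniteDimensional ℝ E] (A : E ≃L[ℝ] E)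
    (hA : ∀ x, A ((A : E →L[ℝ] E).adjoint x) = T x) {Tinv : E →ₗ[ℝ] E}
    (hTinv : ∀ x, T (Tinv x) = x) (f : ℝ → ENNReal) :
    IsElliptical T (volume.withDensity fun z => f ⟪z, Tinv z⟫) := by
  have hform (y : E) : ⟪A y, Tinv (A y)⟫ = ‖y‖ ^ 2 := by
    have hadj : (A : E →L[ℝ] E).adjoint (Tinv (A y)) = y := A.injective (by rw [hA, hTinv])
    rw [← ContinuousLinearEquiv.coe_coe, ← ContinuousLinearMap.adjoint_inner_right,
      ContinuousLinearEquiv.coe_coe, hadj, real_inner_self_eq_norm_sq]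
  have hmap : MeasurePreserving A (volume.map A.symm) volume :=
    A.symm.toHomeomorph.toMeasurableEquiv.measurePreserving_symm volume
  refine ⟨A, (volume.map A.symm).withDensity fun y => f (‖y‖ ^ 2),
    (IsSphericallySymmetric.of_isAddHaarMeasure _).withDensity_norm fun r => f (r ^ 2), hA, ?_⟩
  simpa only [hform] using (measurePreserving_withDensity_comp hmap
    A.toHomeomorph.measurableEmbedding fun z => f ⟪z, Tinv z⟫).map_eq.symm

theorem isNegInvariant (hν : IsElliptical T ν) : ν.IsNegInvariant := by
  obtain ⟨A, σ, hσ, -, rfl⟩ := hν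
  have hAm : Measurable A := A.continuous.measurable
  refine ⟨?_⟩
  conv_rhs => rw [← hσ.isNegInvariant.neg_eq_self, Measure.neg]
  rw [Measure.neg, Measure.map_map measurable_neg hAm, Measure.map_map hAm measurable_neg]
  congr 1 with y
  exact (map_neg A y).symm

theorem exists_integral_max_inner_eq_mul_sqrt (hν : IsElliptical T ν) :
    ∃ c : ℝ, ∀ u : E, ∫ z, max ⟪z, u⟫ 0 ∂ν = c * √⟪u, T u⟫ := by
  obtain ⟨A, σ, hσ, hA, rfl⟩ := hν
  obtain ⟨c, hc⟩ := hσ.exists_integral_max_inner_eq_mul_norm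
  refine ⟨c, fun u => ?_⟩
  rw [integral_max_inner_map, hc, inner_eq_norm_adjoint_sq hA, Real.sqrt_sq (norm_nonneg _)]

theorem exists_pos_integral_max_inner_eq_mul_sqrt [FiniteDimensional ℝ E] [Nontrivial E]
    [IsProbabilityMeasure ν] (hν : IsElliptical T ν) (hac : ν ≪ volume) (hint : Integrable id ν) :
    ∃ c : ℝ, 0 < c ∧ ∀ u : E, ∫ z, max ⟪z, u⟫ 0 ∂ν = c * √⟪u, T u⟫ := by
  obtain ⟨c, hc⟩ := hν.exists_integral_max_inner_eq_mul_sqrt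
  obtain ⟨u, hu⟩ := exists_ne (0 : E)
  have := hν.isNegInvariant
  have hhalf := measureReal_inner_pos_eq_half hac hu
  have hpos : 0 < ∫ z, max ⟪z, u⟫ 0 ∂ν :=
    integral_max_inner_pos hint fun h => by norm_num [measureReal_def, h] at hhalf
  exact ⟨c, pos_of_mul_pos_left (hc u ▸ hpos) (Real.sqrt_nonneg _), hc⟩

theorem setIntegral_halfspace (hν : IsElliptical T ν) (hint : Integrable id ν) (u : E) :
    ∫ z in {z | 0 < ⟪z, u⟫}, z ∂ν = ((∫ z, max ⟪z, u⟫ 0 ∂ν) / ⟪u, T u⟫) • T u := by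
  obtain ⟨A, σ, hσ, hA, rfl⟩ := hν
  have hemb : MeasurableEmbedding A := A.toHomeomorph.measurableEmbedding
  have hσint : Integrable id σ := by
    rw [hemb.integrable_map_iff] at hint
    exact A.integrable_comp_iff.1 hint
  have hpre : A ⁻¹' {z | 0 < ⟪z, u⟫} = {y | 0 < ⟪y, (A : E →L[ℝ] E).adjoint u⟫} := by
    simp only [preimage_ofPred_eq, ContinuousLinearMap.adjoint_inner_right,
      ContinuousLinearEquiv.coe_coe]
  rw [hemb.setIntegral_map, hpre, A.integral_comp_comm, hσ.setIntegral_halfspace hσint, map_smul,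
    hA, integral_max_inner_map, inner_eq_norm_adjoint_sq hA]

end IsElliptical

section Spectral

variable {E : Type*} [NormedAddCommGroup E] [InnerProductSpace ℝ E] [FiniteDimensional ℝ E]
  {T : E →ₗ[ℝ] E}

theorem mul_inner_map_sub_norm_map_sq_eq_sum (hT : T.IsSymmetric) (l : ℝ) (u : E) :
    l * ⟪u, T u⟫ - ‖T u‖ ^ 2 = ∑ i, hT.eigenvalues rfl i * (l - hT.eigenvalues rfl i) *
      ⟪hT.eigenvectorBasis rfl i, u⟫ ^ 2 := by
  set b := hT.eigenvectorBasis rfl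
  have hcoord (i) : ⟪b i, T u⟫ = hT.eigenvalues rfl i * ⟪b i, u⟫ := by
    rw [← hT, hT.apply_eigenvectorBasis, real_inner_smul_left]; rfl
  rw [← real_inner_self_eq_norm_sq, ← b.sum_inner_mul_inner u, ← b.sum_inner_mul_inner (T u),
    Finset.mul_sum, ← Finset.sum_sub_distrib]
  refine Finset.sum_congr rfl fun i _ => ?_
  rw [real_inner_comm (b i) (T u), real_inner_comm (b i) u, hcoord]
  ring

theorem eigenvalues_pos (hT : T.IsSymmetric) (hpos : ∀ x ≠ 0, 0 < ⟪x, T x⟫)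
    (i : Fin (Module.finrank ℝ E)) : 0 < hT.eigenvalues rfl i := by
  have hb := (hT.eigenvectorBasis rfl).orthonormal
  simpa [hT.apply_eigenvectorBasis, inner_smul_right, hb.1 i] using hpos _ (hb.ne_zero i)

theorem eigenvalues_mul_sub_mul_sq_nonneg (hT : T.IsSymmetric) (hpos : ∀ x ≠ 0, 0 < ⟪x, T x⟫)
    {l : ℝ} (hl : ∀ m, Module.End.HasEigenvalue T m → m ≤ l) (u : E)
    (i : Fin (Module.finrank ℝ E)) :
    0 ≤ hT.eigenvalues rfl i * (l - hT.eigenvalues rfl i) *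
      ⟪hT.eigenvectorBasis rfl i, u⟫ ^ 2 :=
  mul_nonneg (mul_nonneg (eigenvalues_pos hT hpos i).le
    (sub_nonneg.2 (hl _ (hT.hasEigenvalue_eigenvalues rfl i)))) (sq_nonneg _)

theorem norm_map_sq_div_inner_map_le (hT : T.IsSymmetric) (hpos : ∀ x ≠ 0, 0 < ⟪x, T x⟫) {l : ℝ}
    (hl : ∀ m, Module.End.HasEigenvalue T m → m ≤ l) {u : E} (hu : u ≠ 0) :
    ‖T u‖ ^ 2 / ⟪u, T u⟫ ≤ l := by
  rw [div_le_iff₀ (hpos u hu), ← sub_nonneg, mul_inner_map_sub_norm_map_sq_eq_sum hT]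
  exact Finset.sum_nonneg fun i _ => eigenvalues_mul_sub_mul_sq_nonneg hT hpos hl u i

theorem norm_map_sq_div_inner_map_eq_iff (hT : T.IsSymmetric) (hpos : ∀ x ≠ 0, 0 < ⟪x, T x⟫)
    {l : ℝ} (hl : ∀ m, Module.End.HasEigenvalue T m → m ≤ l) {u : E} (hu : u ≠ 0) :
    ‖T u‖ ^ 2 / ⟪u, T u⟫ = l ↔ T u = l • u := by
  rw [div_eq_iff (hpos u hu).ne']
  refine ⟨fun h => ?_, fun h => ?_⟩
  · have hsum := mul_inner_map_sub_norm_map_sq_eq_sum hT l u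
    rw [h, sub_self, eq_comm, Finset.sum_eq_zero_iff_of_nonneg fun i _ =>
      eigenvalues_mul_sub_mul_sq_nonneg hT hpos hl u i] at hsum
    refine (hT.eigenvectorBasis rfl).repr.injective (PiLp.ext fun i => ?_)
    have hi : (l - hT.eigenvalues rfl i) * ⟪hT.eigenvectorBasis rfl i, u⟫ = 0 := by
      simpa [(eigenvalues_pos hT hpos i).ne'] using hsum i (Finset.mem_univ i)
    rw [OrthonormalBasis.repr_apply_apply, OrthonormalBasis.repr_apply_apply, inner_smul_right,
      ← hT, hT.apply_eigenvectorBasis, real_inner_smul_left, RCLike.ofReal_real_eq_id, id_eq]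
    linarith
  · rw [← real_inner_self_eq_norm_sq]
    nth_rw 1 [h]
    rw [real_inner_smul_left]

end Spectral

section Matrix

variable {n : Type*} [Fintype n] [DecidableEq n] {S : Matrix n n ℝ}

theorem inner_toEuclideanLin_pos (hS : S.PosDef) {x : EuclideanSpace ℝ n} (hx : x ≠ 0) :
    0 < ⟪x, Matrix.toEuclideanLin S x⟫ := by
  rw [EuclideanSpace.inner_eq_star_dotProduct, dotProduct_comm]
  exact hS.dotProduct_mulVec_pos ((WithLp.ofLp_eq_zero 2).not.2 hx)

theorem toEuclideanLin_apply_toEuclideanLin_inv (hS : IsUnit S) (x : EuclideanSpace ℝ n) :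
    Matrix.toEuclideanLin S (Matrix.toEuclideanLin S⁻¹ x) = x := by
  have hdet : IsUnit S.det := hS.map Matrix.detMonoidHom
  rw [← LinearMap.comp_apply, ← Matrix.toLpLin_mul_same, Matrix.mul_nonsing_inv _ hdet,
    Matrix.toLpLin_one, LinearMap.id_apply]

theorem inner_toEuclideanLin_mul_self (hS : S.IsHermitian) (x : EuclideanSpace ℝ n) :
    ⟪x, Matrix.toEuclideanLin (S * S) x⟫ = ‖Matrix.toEuclideanLin S x‖ ^ 2 := by
  rw [Matrix.toLpLin_mul_same, LinearMap.comp_apply, ← Matrix.isSymmetric_toEuclideanLin_iff.2 hS,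
    real_inner_self_eq_norm_sq]

open scoped MatrixOrder in
theorem exists_apply_adjoint_eq_toEuclideanLin (hS : S.PosDef) :
    ∃ A : EuclideanSpace ℝ n ≃L[ℝ] EuclideanSpace ℝ n, ∀ x,
      A ((A : EuclideanSpace ℝ n →L[ℝ] EuclideanSpace ℝ n).adjoint x)
        = Matrix.toEuclideanLin S x := by
  obtain ⟨B, hB, rfl⟩ := CStarAlgebra.isStrictlyPositive_iff_eq_mul_star_self.1
    hS.isStrictlyPositive
  refine ⟨.unitsEquiv ℝ _ (hB.map (Matrix.toEuclideanCLM (n := n) (𝕜 := ℝ))).unit, fun x => ?_⟩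
  rw [← Matrix.coe_toEuclideanCLM_eq_toEuclideanLin, map_mul, map_star]
  rfl

theorem isElliptical_withDensity_inner_inv (hS : S.PosDef) (f : ℝ → ENNReal) :
    IsElliptical (Matrix.toEuclideanLin S)
      (volume.withDensity fun z => f ⟪z, Matrix.toEuclideanLin S⁻¹ z⟫) :=
  let ⟨A, hA⟩ := exists_apply_adjoint_eq_toEuclideanLin hS
  .withDensity_inner A hA (toEuclideanLin_apply_toEuclideanLin_inv hS.isUnit) f

end Matrix

section Objective

variable {Ω : Type*} [MeasurableSpace Ω] {d : ℕ} {P : Measure Ω} [IsProbabilityMeasure P]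
  {X : Ω → EuclideanSpace ℝ (Fin d)} {μ u : EuclideanSpace ℝ (Fin d)}

theorem halfspaceObjective_zero_of_measureReal_eq_half (hX : Integrable X P)
    (hμ : μ = ∫ ω, X ω ∂P)
    (hhalf : (P.map fun ω => X ω - μ).real {z | 0 < ⟪z, u⟫} = 1 / 2) :
    halfspaceObjective P X μ u 0
      = ‖μ‖ ^ 2 + 4 * ‖∫ z in {z | 0 < ⟪z, u⟫}, z ∂(P.map fun ω => X ω - μ)‖ ^ 2 := by
  have hZ : AEMeasurable (fun ω => X ω - μ) P := hX.aemeasurable.sub_const μ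
  have hs := measurableSet_setOf_inner_pos u
  have hms : NullMeasurableSet {ω | 0 < ⟪X ω - μ, u⟫} P := hZ.nullMeasurableSet_preimage hs
  have hcompl : {ω | 0 < ⟪X ω - μ, u⟫}ᶜ = {ω | ⟪X ω - μ, u⟫ ≤ 0} := by
    simp only [compl_ofPred, not_lt]
  have hgt : P.real {ω | 0 < ⟪X ω - μ, u⟫} = 1 / 2 := by
    rwa [map_measureReal_apply_of_aemeasurable hZ hs] at hhalf
  have hle : P.real {ω | ⟪X ω - μ, u⟫ ≤ 0} = 1 / 2 := by
    rw [← hcompl, probReal_compl_eq_one_sub₀ hms, hgt]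
    norm_num
  set m := ∫ z in {z | 0 < ⟪z, u⟫}, z ∂(P.map fun ω => X ω - μ) with hm
  have hmgt : ∫ ω in {ω | 0 < ⟪X ω - μ, u⟫}, X ω ∂P = (1 / 2 : ℝ) • μ + m := by
    have hmap := setIntegral_map hs aestronglyMeasurable_id hZ
    simp only [id_eq, preimage_ofPred_eq] at hmap
    rw [hm, hmap, integral_sub hX.integrableOn (integrable_const μ).integrableOn,
      setIntegral_const, hgt]
    abel
  have hmle : ∫ ω in {ω | ⟪X ω - μ, u⟫ ≤ 0}, X ω ∂P = (1 / 2 : ℝ) • μ - m := by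
    have hadd := integral_add_compl₀ hms hX
    rw [hcompl, hmgt, ← hμ] at hadd
    rw [eq_sub_of_add_eq' hadd]
    module
  rw [halfspaceObjective, hmgt, hmle, ← measureReal_def, ← measureReal_def, hgt, hle,
    norm_add_sq_real, norm_sub_sq_real, norm_smul, mul_pow]
  norm_num
  ring

theorem exists_halfspaceObjective_zero_eq_of_isElliptical [NeZero d]
    {T : EuclideanSpace ℝ (Fin d) →ₗ[ℝ] EuclideanSpace ℝ (Fin d)}
    (hX : Integrable X P) (hμ : μ = ∫ ω, X ω ∂P)
    (hell : IsElliptical T (P.map fun ω => X ω - μ))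
    (hac : P.map (fun ω => X ω - μ) ≪ volume) :
    ∃ c : ℝ, 0 < c ∧ (∀ u, ∫ ω, max ⟪X ω - μ, u⟫ 0 ∂P = c * √⟪u, T u⟫) ∧
      ∀ u ≠ 0, halfspaceObjective P X μ u 0 = ‖μ‖ ^ 2 + 4 * c ^ 2 * (‖T u‖ ^ 2 / ⟪u, T u⟫) := by
  have hZ : AEMeasurable (fun ω => X ω - μ) P := hX.aemeasurable.sub_const μ
  have := Measure.isProbabilityMeasure_map hZ
  have := hell.isNegInvariant
  have hint : Integrable id (P.map fun ω => X ω - μ) :=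
    (integrable_map_measure aestronglyMeasurable_id hZ).2 (hX.sub (integrable_const μ))
  obtain ⟨c, hc, hmax⟩ := hell.exists_pos_integral_max_inner_eq_mul_sqrt hac hint
  refine ⟨c, hc, fun u => ?_, fun u hu => ?_⟩
  · rw [← hmax, integral_map hZ (by fun_prop)]
  · rw [halfspaceObjective_zero_of_measureReal_eq_half hX hμ
      (measureReal_inner_pos_eq_half hac hu), hell.setIntegral_halfspace hint, hmax, norm_smul,
      mul_pow, Real.norm_eq_abs, sq_abs, mul_div_assoc, Real.sqrt_div_self', mul_one_div, div_pow,
      Real.sq_sqrt (hell.inner_nonneg u)]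
    ring

end Objective

theorem halfspace_objective_optimal_direction_general {Ω : Type*} [MeasurableSpace Ω] {d : ℕ}
    (P : Measure Ω) [IsProbabilityMeasure P]
    (X : Ω → EuclideanSpace ℝ (Fin d)) (hX : Integrable X P)
    (μ : EuclideanSpace ℝ (Fin d)) (hμ : μ = ∫ ω, X ω ∂P)
    (S : Matrix (Fin d) (Fin d) ℝ) (hS : S.PosDef)
    (f : ℝ → ENNReal) (hdens : Measure.map X P = volume.withDensity
      (fun x => f ⟪x - μ, Matrix.toEuclideanLin S⁻¹ (x - μ)⟫))
    (lmax : ℝ)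
    (hlmax : IsGreatest
      {l : ℝ | ∃ v : EuclideanSpace ℝ (Fin d), v ≠ 0 ∧ Matrix.toEuclideanLin S v = l • v}
      lmax) :
    ∃ c₀ : ℝ,
      (∀ w : EuclideanSpace ℝ (Fin d), ‖w‖ = 1 →
        c₀ = (∫ ω, max ⟪X ω - μ, w⟫ 0 ∂P) / Real.sqrt ⟪w, Matrix.toEuclideanLin S w⟫)
      ∧ (∀ u : EuclideanSpace ℝ (Fin d), ‖u‖ = 1 →
          halfspaceObjective P X μ u 0
            = ‖μ‖ ^ 2 + 4 * c₀ ^ 2 * ⟪u, Matrix.toEuclideanLin (S * S) u⟫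
                / ⟪u, Matrix.toEuclideanLin S u⟫)
      ∧ IsGreatest {r : ℝ | ∃ u : EuclideanSpace ℝ (Fin d), ‖u‖ = 1
            ∧ halfspaceObjective P X μ u 0 = r}
          (‖μ‖ ^ 2 + 4 * c₀ ^ 2 * lmax)
      ∧ (∀ u : EuclideanSpace ℝ (Fin d), ‖u‖ = 1 →
          (halfspaceObjective P X μ u 0 = ‖μ‖ ^ 2 + 4 * c₀ ^ 2 * lmax
            ↔ Matrix.toEuclideanLin S u = lmax • u)) := by
  set T := Matrix.toEuclideanLin S
  obtain ⟨⟨v, hv, hTv⟩, hub⟩ := hlmax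
  have : NeZero d := ⟨by rintro rfl; exact hv (Subsingleton.elim v 0)⟩
  have hsymm : T.IsSymmetric := Matrix.isSymmetric_toEuclideanLin_iff.2 hS.isHermitian
  have hpos : ∀ x ≠ 0, 0 < ⟪x, T x⟫ := fun x => inner_toEuclideanLin_pos hS
  have hl (m : ℝ) (hm : Module.End.HasEigenvalue T m) : m ≤ lmax :=
    let ⟨w, hw⟩ := hm.exists_hasEigenvector
    hub ⟨w, hw.2, hw.apply_eq_smul⟩
  have hlaw := map_sub_const_eq_withDensity hX.aemeasurable
    (h := fun z => f ⟪z, Matrix.toEuclideanLin S⁻¹ z⟫) hdens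
  obtain ⟨c, hc, hmax, hF⟩ := exists_halfspaceObjective_zero_eq_of_isElliptical hX hμ
    (hlaw ▸ isElliptical_withDensity_inner_inv hS f)
    (hlaw ▸ withDensity_absolutelyContinuous _ _)
  have hne (u : EuclideanSpace ℝ (Fin d)) (hu : ‖u‖ = 1) : u ≠ 0 :=
    norm_ne_zero_iff.1 (hu ▸ one_ne_zero)
  have hiff (u : EuclideanSpace ℝ (Fin d)) (hu : ‖u‖ = 1) :
      halfspaceObjective P X μ u 0 = ‖μ‖ ^ 2 + 4 * c ^ 2 * lmax ↔ T u = lmax • u := by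
    rw [hF u (hne u hu), add_right_inj, mul_right_inj' (by positivity),
      norm_map_sq_div_inner_map_eq_iff hsymm hpos hl (hne u hu)]
  refine ⟨c, fun w hw => ?_, fun u hu => ?_, ⟨⟨‖v‖⁻¹ • v, ?_⟩, ?_⟩, hiff⟩
  · rw [hmax, mul_div_cancel_right₀ _ (Real.sqrt_pos.2 (hpos w (hne w hw))).ne']
  · rw [hF u (hne u hu), inner_toEuclideanLin_mul_self hS.isHermitian, mul_div_assoc]
  · have hnorm := norm_smul_inv_norm (𝕜 := ℝ) hv
    exact ⟨hnorm, (hiff _ hnorm).2 (by rw [map_smul, hTv, smul_comm])⟩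
  · rintro _ ⟨u, hu, rfl⟩
    rw [hF u (hne u hu)]
    gcongr
    exact norm_map_sq_div_inner_map_le hsymm hpos hl (hne u hu)

/-- for an elliptical `X` with mean `μ`, positive definite scatter `Σ`,
`E[‖X‖²] < ∞`, and weakly symmetric log-concave projections, one has
`F(u,0) = ‖μ‖² + 4c₀²·(uᵀΣ²u)/(uᵀΣu)` for all unit `u`, where
`c₀ = E[max(⟨X−μ,w⟩,0)]/√(wᵀΣw)` is independent of the unit vector `w`; consequently the
maximum of `u ↦ F(u,0)` over unit vectors is `‖μ‖² + 4c₀²·λ_max(Σ)`, attained exactly at the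
unit eigenvectors of `Σ` for the largest eigenvalue `λ_max(Σ)`. -/
theorem halfspace_objective_optimal_direction {Ω : Type*} [MeasurableSpace Ω] {d : ℕ}
    (P : Measure Ω) [IsProbabilityMeasure P]
    (X : Ω → EuclideanSpace ℝ (Fin d)) (hX : Measurable X)
    (hX2 : Integrable (fun ω => ‖X ω‖ ^ 2) P)
    (μ : EuclideanSpace ℝ (Fin d)) (hμ : μ = ∫ ω, X ω ∂P)
    (S : Matrix (Fin d) (Fin d) ℝ) (hS : S.PosDef)
    (g : ℝ → ℝ) (hg : ∀ s, 0 ≤ g s) (C : ℝ) (hC : 0 < C)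
    (hdens : Measure.map X P = volume.withDensity
      (fun x => ENNReal.ofReal (C * g ⟪x - μ, Matrix.toEuclideanLin S⁻¹ (x - μ)⟫)))
    (hproj : ∀ u : EuclideanSpace ℝ (Fin d), ‖u‖ = 1 →
      ∃ V : ℝ → ℝ, ConvexOn ℝ Set.univ V
        ∧ Measure.map (fun ω => ⟪X ω - μ, u⟫) P
            = volume.withDensity (fun s => ENNReal.ofReal (Real.exp (-V s)))
        ∧ P {ω | ⟪X ω - μ, u⟫ ≤ ∫ ω', ⟪X ω' - μ, u⟫ ∂P} = 1 / 2)
    (lmax : ℝ)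
    (hlmax : IsGreatest
      {l : ℝ | ∃ v : EuclideanSpace ℝ (Fin d), v ≠ 0 ∧ Matrix.toEuclideanLin S v = l • v}
      lmax) :
    ∃ c₀ : ℝ,
      (∀ w : EuclideanSpace ℝ (Fin d), ‖w‖ = 1 →
        c₀ = (∫ ω, max ⟪X ω - μ, w⟫ 0 ∂P) / Real.sqrt ⟪w, Matrix.toEuclideanLin S w⟫)
      ∧ (∀ u : EuclideanSpace ℝ (Fin d), ‖u‖ = 1 →
          halfspaceObjective P X μ u 0
            = ‖μ‖ ^ 2 + 4 * c₀ ^ 2 * ⟪u, Matrix.toEuclideanLin (S * S) u⟫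
                / ⟪u, Matrix.toEuclideanLin S u⟫)
      ∧ IsGreatest {r : ℝ | ∃ u : EuclideanSpace ℝ (Fin d), ‖u‖ = 1
            ∧ halfspaceObjective P X μ u 0 = r}
          (‖μ‖ ^ 2 + 4 * c₀ ^ 2 * lmax)
      ∧ (∀ u : EuclideanSpace ℝ (Fin d), ‖u‖ = 1 →
          (halfspaceObjective P X μ u 0 = ‖μ‖ ^ 2 + 4 * c₀ ^ 2 * lmax
            ↔ Matrix.toEuclideanLin S u = lmax • u)) := by
  have hXi : MemLp X 2 P := (memLp_two_iff_integrable_sq_norm hX.aestronglyMeasurable).2 hX2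
  exact halfspace_objective_optimal_direction_general P X (hXi.integrable one_le_two) μ hμ S hS
    (fun s => ENNReal.ofReal (C * g s)) hdens lmax hlmax
end

section
/- Let X be the real random variable with density p(x) = 21/8 for |x| ≤ 1/10, p(x) = 1/8 for 1/10 < |x| ≤ 2, and p(x) = 0 otherwise. Then: (a) E[X] = 0; (b) p is not log-concave (e.g. p(0.15)² < p(0)·p(0.3)); (c) the function f_X(t) = E[X·1_{X≤t}]²/P(X ≤ t) + E[X·1_{X>t}]²/P(X > t) attains its global maximum on (−2, 2) exactly at the two points t = 2√5 − 4 and t = −(2√5 − 4); in particular f_X(t) < f_X(2√5 − 4) for all t ∈ (−2, 2) with t ≠ ±(2√5 − 4). -/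
open MeasureTheory Real Set

/-- The two-step objective `f_X(t) = E[X·1_{X≤t}]²/P(X ≤ t) + E[X·1_{X>t}]²/P(X > t)`. -/
noncomputable def twoStepObjective {Ω : Type*} [MeasurableSpace Ω]
    (P : Measure Ω) (X : Ω → ℝ) (t : ℝ) : ℝ :=
  (∫ ω in {ω | X ω ≤ t}, X ω ∂P) ^ 2 / (P {ω | X ω ≤ t}).toReal
    + (∫ ω in {ω | t < X ω}, X ω ∂P) ^ 2 / (P {ω | t < X ω}).toReal

/-- The explicit symmetric step density: `21/8` on `[−1/10, 1/10]`, `1/8` on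
`(1/10, 2] ∪ [−2, −1/10)`, and `0` outside `[−2, 2]`. -/
noncomputable def stepDensity (x : ℝ) : ℝ :=
  if |x| ≤ 1 / 10 then 21 / 8 else if |x| ≤ 2 then 1 / 8 else 0

/-!
Since `X` is centred, `f_X(t) = E[X·1_{X>t}]² / (P(X > t)·P(X ≤ t))`, and since its law is symmetric
and diffuse, `f_X` is even, so only `0 ≤ t < 2` matters. The density is a mixture of the uniform
densities on `[-2, 2]` and `[-1/10, 1/10]`, which makes the tails explicit. For `t ≤ 1/10` the
objective stays below `9/25`. For `1/10 ≤ t < 2` it is `(2 - t)(2 + t)² / (4(6 + t))`, which is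
critical where `t² + 8t = 4`, with positive root `2√5 - 4` and value `10√5 - 22` there. The gap
between this value and the one at `t` has numerator `(t - (2√5 - 4))² (t + 4√5 - 6)`.
-/

section TwoStepObjective

variable {Ω : Type*} [MeasurableSpace Ω] {P : Measure Ω} {X : Ω → ℝ}

lemma twoStepObjective_eq_map (hX : AEMeasurable X P) (t : ℝ) :
    twoStepObjective P X t = twoStepObjective (P.map X) id t := by
  have hlower : MeasurableSet {x : ℝ | id x ≤ t} := measurableSet_Iic
  have hupper : MeasurableSet {x : ℝ | t < id x} := measurableSet_Ioi
  unfold twoStepObjective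
  rw [Measure.map_apply_of_aemeasurable hX hlower, Measure.map_apply_of_aemeasurable hX hupper,
    setIntegral_map hlower measurable_id.aestronglyMeasurable hX,
    setIntegral_map hupper measurable_id.aestronglyMeasurable hX]
  rfl

lemma twoStepObjective_neg_neg {t : ℝ} (ht : P {ω | X ω = t} = 0) :
    twoStepObjective P (-X) (-t) = twoStepObjective P X t := by
  have hne : ∀ᵐ ω ∂P, X ω ≠ t := ae_iff.2 (by simpa only [not_not])
  have hlower : {ω | (-X) ω ≤ -t} =ᵐ[P] {ω | t < X ω} := by
    filter_upwards [hne] with ω hω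
    exact propext (neg_le_neg_iff.trans (Ne.le_iff_lt hω.symm))
  have hupper : {ω | -t < (-X) ω} =ᵐ[P] {ω | X ω ≤ t} := by
    filter_upwards [hne] with ω hω
    exact propext (neg_lt_neg_iff.trans (Ne.le_iff_lt hω).symm)
  unfold twoStepObjective
  rw [setIntegral_congr_set hlower, setIntegral_congr_set hupper, measure_congr hlower,
    measure_congr hupper]
  simp only [Pi.neg_apply, integral_neg, neg_sq, add_comm]

lemma twoStepObjective_of_integral_eq_zero [IsProbabilityMeasure P] (hX : Integrable X P)
    (hmean : ∫ ω, X ω ∂P = 0) (t : ℝ) :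
    twoStepObjective P X t = (∫ ω in {ω | t < X ω}, X ω ∂P) ^ 2 /
      (P.real {ω | t < X ω} * (1 - P.real {ω | t < X ω})) := by
  have hnull : NullMeasurableSet {ω | t < X ω} P :=
    nullMeasurableSet_lt aemeasurable_const hX.aemeasurable
  have hcompl : {ω | X ω ≤ t} = {ω | t < X ω}ᶜ := by ext; simp
  have hprob := probReal_compl_eq_one_sub₀ hnull
  have hsum := integral_add_compl₀ hnull hX
  rw [hmean, add_eq_zero_iff_neg_eq] at hsum
  unfold twoStepObjective
  rw [hcompl, ← Measure.real, ← Measure.real, ← hprob, ← hsum, neg_sq]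
  by_cases hupper : P.real {ω | t < X ω} = 0
  · simp [setIntegral_measure_zero _ ((measureReal_eq_zero_iff).1 hupper)]
  by_cases hlower : P.real {ω | t < X ω}ᶜ = 0
  · rw [setIntegral_measure_zero _ ((measureReal_eq_zero_iff).1 hlower), neg_eq_zero] at hsum
    simp [hsum]
  · rw [div_add_div _ _ hlower hupper, mul_comm (P.real {ω | t < X ω}ᶜ) (_ ^ 2), ← mul_add, hprob,
      add_sub_cancel, mul_one, mul_comm (1 - _)]

end TwoStepObjective

section NegInvariant

lemma isNegInvariant_withDensity {G : Type*} [MeasurableSpace G] [InvolutiveNeg G]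
    [MeasurableNeg G] (μ : Measure G) [μ.IsNegInvariant] {f : G → ENNReal} (hf : f.Even) :
    (μ.withDensity f).IsNegInvariant := by
  refine ⟨Measure.ext fun s hs => ?_⟩
  rw [Measure.neg_apply, withDensity_apply _ hs, withDensity_apply _ hs.neg,
    ← (Measure.measurePreserving_neg μ).setLIntegral_comp_preimage_emb
      (MeasurableEquiv.neg G).measurableEmbedding]
  simp only [hf.eq, neg_preimage, neg_neg]

variable (μ : Measure ℝ) [μ.IsNegInvariant]

lemma integral_id_eq_zero_of_isNegInvariant : ∫ x, x ∂μ = 0 := by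
  have h := integral_neg_eq_self (fun x : ℝ => x) μ
  rwa [integral_neg, neg_eq_self] at h

lemma twoStepObjective_even [NullSingletonClass μ] : (twoStepObjective μ id).Even := fun t =>
  calc twoStepObjective μ id (-t)
      = twoStepObjective (μ.map Neg.neg) id (-t) := by rw [Measure.map_neg_eq_self]
    _ = twoStepObjective μ (-id) (-t) :=
      (twoStepObjective_eq_map measurable_neg.aemeasurable _).symm
    _ = twoStepObjective μ id t := twoStepObjective_neg_neg (measure_singleton t)

end NegInvariant

section IntervalTails

lemma integrable_smul_restrict_Icc {f : ℝ → ℝ} (hf : Continuous f) (a b c : ℝ) :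
    Integrable f (ENNReal.ofReal c • volume.restrict (Icc a b)) :=
  Integrable.smul_measure hf.integrableOn_Icc ENNReal.ofReal_ne_top

lemma Ioi_inter_Icc_of_le {α : Type*} [Preorder α] {a b t : α} (hat : a ≤ t) :
    Ioi t ∩ Icc a b = Ioc t b := by
  ext x
  exact ⟨fun h => ⟨h.1, h.2.2⟩, fun h => ⟨h.1, hat.trans h.1.le, h.2⟩⟩

lemma volume_real_restrict_Icc_Ioi {a b t : ℝ} (hat : a ≤ t) :
    (volume.restrict (Icc a b)).real (Ioi t) = max (b - t) 0 := by
  rw [measureReal_restrict_apply measurableSet_Ioi, Ioi_inter_Icc_of_le hat, Real.volume_real_Ioc]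

lemma setIntegral_id_restrict_Icc_neg_Ioi {a t : ℝ} (hat : -a ≤ t) :
    ∫ x in Ioi t, x ∂volume.restrict (Icc (-a) a) = max (a ^ 2 - t ^ 2) 0 / 2 := by
  rw [Measure.restrict_restrict measurableSet_Ioi, Ioi_inter_Icc_of_le hat]
  rcases le_total t a with hta | hta
  · rw [← intervalIntegral.integral_of_le hta, integral_id,
      max_eq_left (sub_nonneg.2 (sq_le_sq' hat hta))]
  · rw [Ioc_eq_empty hta.not_gt, max_eq_right (sub_nonpos.2 (sq_le_sq' (by linarith) hta))]
    simp

end IntervalTails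

section LogConcave

/-- Log-concavity of a function, by the multiplicative inequality `p(x)^θ p(y)^(1-θ) ≤
p(θx + (1-θ)y)`, so that zeros of `p` need no convention for `log 0`. -/
def IsLogConcave {E : Type*} [AddCommMonoid E] [SMul ℝ E] (p : E → ℝ) : Prop :=
  ∀ (x y : E) (θ : ℝ), 0 ≤ θ → θ ≤ 1 → p x ^ θ * p y ^ (1 - θ) ≤ p (θ • x + (1 - θ) • y)

lemma IsLogConcave.mul_le_sq_midpoint {E : Type*} [AddCommMonoid E] [SMul ℝ E] {p : E → ℝ}
    (hp : IsLogConcave p) {x y : E} (hx : 0 ≤ p x) (hy : 0 ≤ p y) :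
    p x * p y ≤ p ((1 / 2 : ℝ) • x + (1 / 2 : ℝ) • y) ^ 2 := by
  have h := hp x y (1 / 2) (by norm_num) (by norm_num)
  rw [sub_half, ← Real.sqrt_eq_rpow, ← Real.sqrt_eq_rpow] at h
  calc p x * p y = (√(p x) * √(p y)) ^ 2 := by rw [mul_pow, Real.sq_sqrt hx, Real.sq_sqrt hy]
    _ ≤ _ := pow_le_pow_left₀ (by positivity) h 2

end LogConcave

section StepDensity

lemma stepDensity_of_abs_le {x : ℝ} (hx : |x| ≤ 1 / 10) : stepDensity x = 21 / 8 := if_pos hx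

lemma stepDensity_of_lt_abs {x : ℝ} (hx : 1 / 10 < |x|) (hx' : |x| ≤ 2) :
    stepDensity x = 1 / 8 := by
  rw [stepDensity, if_neg hx.not_ge, if_pos hx']

lemma stepDensity_even : stepDensity.Even := fun x => by simp only [stepDensity, abs_neg]

lemma stepDensity_sq_lt : stepDensity 0.15 ^ 2 < stepDensity 0 * stepDensity 0.3 := by
  rw [stepDensity_of_lt_abs (x := 0.15), stepDensity_of_abs_le (x := 0),
    stepDensity_of_lt_abs (x := 0.3)] <;> norm_num [abs_of_pos]

lemma not_isLogConcave_stepDensity : ¬ IsLogConcave stepDensity := by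
  intro h
  have hmid := h.mul_le_sq_midpoint (x := 0) (y := 0.3)
    (by rw [stepDensity_of_abs_le] <;> norm_num)
    (by rw [stepDensity_of_lt_abs] <;> norm_num [abs_of_pos])
  rw [show (1 / 2 : ℝ) • (0 : ℝ) + (1 / 2 : ℝ) • 0.3 = 0.15 by norm_num] at hmid
  exact hmid.not_gt stepDensity_sq_lt

end StepDensity

section StepLaw

/-- The law on `ℝ` with density `stepDensity`. -/
noncomputable def stepLaw : Measure ℝ :=
  volume.withDensity fun x => ENNReal.ofReal (stepDensity x)

instance : stepLaw.IsNegInvariant :=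
  isNegInvariant_withDensity volume (stepDensity_even.left_comp ENNReal.ofReal)

instance : NullSingletonClass stepLaw := nullSingletonClass_withDensity _

lemma stepLaw_eq_mixture :
    stepLaw = ENNReal.ofReal (1 / 8) • volume.restrict (Icc (-2) 2) +
      ENNReal.ofReal (5 / 2) • volume.restrict (Icc (-(1 / 10)) (1 / 10)) := by
  have hdensity : (fun x => ENNReal.ofReal (stepDensity x)) =
      (Icc (-2) 2).indicator (fun _ => ENNReal.ofReal (1 / 8)) +
        (Icc (-(1 / 10)) (1 / 10)).indicator (fun _ => ENNReal.ofReal (5 / 2)) := by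
    funext x
    simp only [stepDensity, Pi.add_apply, indicator, mem_Icc, ← abs_le]
    split_ifs
    · rw [← ENNReal.ofReal_add (by norm_num) (by norm_num)]
      norm_num
    · linarith
    · simp
    · simp
  rw [stepLaw, hdensity, withDensity_add_left (measurable_const.indicator measurableSet_Icc),
    withDensity_indicator measurableSet_Icc, withDensity_indicator measurableSet_Icc,
    withDensity_const, withDensity_const]

instance : IsProbabilityMeasure stepLaw where
  measure_univ := by
    simp only [stepLaw_eq_mixture, Measure.add_apply, Measure.smul_apply, smul_eq_mul,
      Measure.restrict_apply_univ, Real.volume_Icc]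
    rw [← ENNReal.ofReal_mul (by norm_num), ← ENNReal.ofReal_mul (by norm_num),
      ← ENNReal.ofReal_add (by norm_num) (by norm_num)]
    norm_num

lemma integrable_id_stepLaw : Integrable id stepLaw := by
  rw [stepLaw_eq_mixture]
  exact (integrable_smul_restrict_Icc continuous_id _ _ _).add_measure
    (integrable_smul_restrict_Icc continuous_id _ _ _)

lemma stepLaw_real_Ioi {t : ℝ} (ht : 0 ≤ t) :
    stepLaw.real (Ioi t) = max (2 - t) 0 / 8 + 5 / 2 * max (1 / 10 - t) 0 := by
  have hfin (a b c : ℝ) : IsFiniteMeasure (ENNReal.ofReal c • volume.restrict (Icc a b)) :=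
    Measure.smul_finite _ ENNReal.ofReal_ne_top
  rw [stepLaw_eq_mixture, measureReal_add_apply, measureReal_ennreal_smul_apply,
    measureReal_ennreal_smul_apply, volume_real_restrict_Icc_Ioi (by linarith),
    volume_real_restrict_Icc_Ioi (by linarith), ENNReal.toReal_ofReal (by norm_num),
    ENNReal.toReal_ofReal (by norm_num)]
  ring

lemma setIntegral_id_stepLaw_Ioi {t : ℝ} (ht : 0 ≤ t) :
    ∫ x in Ioi t, x ∂stepLaw =
      max (2 ^ 2 - t ^ 2) 0 / 16 + 5 / 4 * max ((1 / 10) ^ 2 - t ^ 2) 0 := by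
  rw [stepLaw_eq_mixture, Measure.restrict_add,
    integral_add_measure (integrable_smul_restrict_Icc continuous_id' _ _ _).restrict
      (integrable_smul_restrict_Icc continuous_id' _ _ _).restrict,
    Measure.restrict_smul, Measure.restrict_smul, integral_smul_measure, integral_smul_measure,
    setIntegral_id_restrict_Icc_neg_Ioi (by linarith),
    setIntegral_id_restrict_Icc_neg_Ioi (by linarith), ENNReal.toReal_ofReal (by norm_num),
    ENNReal.toReal_ofReal (by norm_num), smul_eq_mul, smul_eq_mul]
  ring

lemma twoStepObjective_stepLaw (t : ℝ) :
    twoStepObjective stepLaw id t = (∫ x in Ioi t, x ∂stepLaw) ^ 2 /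
      (stepLaw.real (Ioi t) * (1 - stepLaw.real (Ioi t))) :=
  twoStepObjective_of_integral_eq_zero integrable_id_stepLaw
    (integral_id_eq_zero_of_isNegInvariant stepLaw) t

lemma twoStepObjective_stepLaw_outer {t : ℝ} (ht : 1 / 10 ≤ t) (ht' : t < 2) :
    twoStepObjective stepLaw id t = (2 - t) * (2 + t) ^ 2 / (4 * (6 + t)) := by
  have hmass : stepLaw.real (Ioi t) = (2 - t) / 8 := by
    rw [stepLaw_real_Ioi (by linarith), max_eq_left (by linarith), max_eq_right (by linarith)]
    ring
  have hmoment : ∫ x in Ioi t, x ∂stepLaw = (2 - t) * (2 + t) / 16 := by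
    rw [setIntegral_id_stepLaw_Ioi (by linarith), max_eq_left (by nlinarith),
      max_eq_right (by nlinarith)]
    ring
  have hupper : 2 - t ≠ 0 := by linarith
  have hlower : 6 + t ≠ 0 := by linarith
  rw [twoStepObjective_stepLaw, hmass, hmoment, show 1 - (2 - t) / 8 = (6 + t) / 8 by ring]
  field_simp
  norm_num

lemma twoStepObjective_stepLaw_inner {t : ℝ} (ht : 0 ≤ t) (ht' : t ≤ 1 / 10) :
    twoStepObjective stepLaw id t = 441 * (1 / 5 - t ^ 2) ^ 2 / (4 * (16 - 441 * t ^ 2)) := by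
  have hmass : stepLaw.real (Ioi t) = (4 - 21 * t) / 8 := by
    rw [stepLaw_real_Ioi ht, max_eq_left (by linarith), max_eq_left (by linarith)]
    ring
  have hmoment : ∫ x in Ioi t, x ∂stepLaw = 21 * (1 / 5 - t ^ 2) / 16 := by
    rw [setIntegral_id_stepLaw_Ioi ht, max_eq_left (by nlinarith), max_eq_left (by nlinarith)]
    ring
  have hprod : (4 - 21 * t) / 8 * (1 - (4 - 21 * t) / 8) = (16 - 441 * t ^ 2) / 64 := by ring
  rw [twoStepObjective_stepLaw, hmass, hmoment, hprod]
  field_simp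
  ring

lemma twoStepObjective_stepLaw_inner_lt {t : ℝ} (ht : 0 ≤ t) (ht' : t ≤ 1 / 10) :
    twoStepObjective stepLaw id t < 9 / 25 := by
  have hsq : t ^ 2 ≤ (1 / 10) ^ 2 := pow_le_pow_left₀ ht ht' 2
  rw [twoStepObjective_stepLaw_inner ht ht', div_lt_iff₀ (by linarith)]
  nlinarith [sq_nonneg t]

end StepLaw

section Maximizer

lemma sqrt_five_mem_Ioo : √5 ∈ Ioo 2.236 2.237 :=
  ⟨Real.lt_sqrt_of_sq_lt (by norm_num), (Real.sqrt_lt' (by norm_num)).2 (by norm_num)⟩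

lemma outer_gap_eq (t : ℝ) :
    (10 * √5 - 22) * (4 * (6 + t)) - (2 - t) * (2 + t) ^ 2 =
      (t - (2 * √5 - 4)) ^ 2 * (t + 4 * √5 - 6) := by
  have h5 : √5 ^ 2 = 5 := Real.sq_sqrt (by norm_num)
  linear_combination (12 * t - 16 * √5 + 88) * h5

lemma twoStepObjective_stepLaw_maximizer :
    twoStepObjective stepLaw id (2 * √5 - 4) = 10 * √5 - 22 := by
  obtain ⟨hlo, hhi⟩ := sqrt_five_mem_Ioo
  rw [twoStepObjective_stepLaw_outer (by linarith) (by linarith), div_eq_iff (by linarith),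
    eq_comm, ← sub_eq_zero, outer_gap_eq]
  simp

lemma twoStepObjective_stepLaw_outer_lt {t : ℝ} (ht : 1 / 10 ≤ t) (ht' : t < 2)
    (hne : t ≠ 2 * √5 - 4) : twoStepObjective stepLaw id t < 10 * √5 - 22 := by
  have hgap : 0 < (t - (2 * √5 - 4)) ^ 2 * (t + 4 * √5 - 6) :=
    mul_pos (sq_pos_of_ne_zero (sub_ne_zero.2 hne)) (by linarith [sqrt_five_mem_Ioo.1])
  rw [twoStepObjective_stepLaw_outer ht ht', div_lt_iff₀ (by linarith), ← sub_pos]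
  rwa [outer_gap_eq]

lemma twoStepObjective_stepLaw_lt {t : ℝ} (ht : 0 ≤ t) (ht' : t < 2) (hne : t ≠ 2 * √5 - 4) :
    twoStepObjective stepLaw id t < twoStepObjective stepLaw id (2 * √5 - 4) := by
  rw [twoStepObjective_stepLaw_maximizer]
  rcases le_total t (1 / 10) with hinner | houter
  · exact (twoStepObjective_stepLaw_inner_lt ht hinner).trans (by linarith [sqrt_five_mem_Ioo.1])
  · exact twoStepObjective_stepLaw_outer_lt houter ht' hne

end Maximizer

/-- for `X` with density `stepDensity`: (a) `E[X] = 0`; (b) the density is not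
log-concave; (c) `f_X` attains its global maximum on `(−2, 2)` exactly at the two points
`±(2√5 − 4)`. -/
theorem step_density_two_maximizers {Ω : Type*} [MeasurableSpace Ω]
    (P : Measure Ω) [IsProbabilityMeasure P] (X : Ω → ℝ) (hX : Measurable X)
    (hdens : Measure.map X P
      = volume.withDensity (fun x => ENNReal.ofReal (stepDensity x))) :
    (∫ ω, X ω ∂P = 0)
      ∧ ¬ (∀ x y θ : ℝ, 0 ≤ θ → θ ≤ 1 →
            stepDensity x ^ θ * stepDensity y ^ (1 - θ)
              ≤ stepDensity (θ * x + (1 - θ) * y))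
      ∧ stepDensity 0.15 ^ 2 < stepDensity 0 * stepDensity 0.3
      ∧ twoStepObjective P X (-(2 * Real.sqrt 5 - 4))
          = twoStepObjective P X (2 * Real.sqrt 5 - 4)
      ∧ ∀ t ∈ Set.Ioo (-2 : ℝ) 2, t ≠ 2 * Real.sqrt 5 - 4 → t ≠ -(2 * Real.sqrt 5 - 4) →
          twoStepObjective P X t < twoStepObjective P X (2 * Real.sqrt 5 - 4) := by
  have hlaw : P.map X = stepLaw := hdens
  have hobj (t : ℝ) : twoStepObjective P X t = twoStepObjective stepLaw id t := by
    rw [twoStepObjective_eq_map hX.aemeasurable, hlaw]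
  have heven := twoStepObjective_even stepLaw
  refine ⟨?_, not_isLogConcave_stepDensity, stepDensity_sq_lt, ?_, fun t ht hne hne' => ?_⟩
  · rw [← integral_id_eq_zero_of_isNegInvariant stepLaw, ← hlaw,
      integral_map hX.aemeasurable measurable_id'.aestronglyMeasurable]
  · rw [hobj, hobj, heven.eq]
  · rw [hobj, hobj]
    rcases le_total 0 t with hpos | hneg
    · exact twoStepObjective_stepLaw_lt hpos ht.2 hne
    · rw [← heven.eq t]
      exact twoStepObjective_stepLaw_lt (neg_nonneg.2 hneg) (neg_lt.1 ht.1)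
        fun h => hne' (neg_eq_iff_eq_neg.1 h)
end
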